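/- arXiv:1803.03978 — 3 statements merged into one kernel-verified Lean document; each statement's English description precedes it below -/
import Mathlib

section
/- Let $P$ be a finite nonempty subset of $\mathbb{R}^d$, let $k \ge 1$ be an integer, let $\varepsilon > 0$, and let $f : P \to P$ be a map satisfying $\sum_{p \in P} \operatorname{dist}(p, f(p)) \le \varepsilon \cdot \mathrm{Opt}_k(P)$, where $\mathrm{Opt}_k(P)$ is the optimal $k$-median cost of $P$. Let $S = f(P)$ be the image of $f$, weighted by $w(s) = |f^{-1}(s)|$ for each $s \in S$. Then for every finite nonempty set $C \subseteq \mathbb{R}^d$ with $|C| \le k$, $(1-\varepsilon)\Phi_M(P,C) \le \sum_{s \in S} w(s) \min_{c\in C}\operatorname{dist}(s,c) \le (1+\varepsilon)\Phi_M(P,C)$; that is, the weighted set $S$ is a $(k,\varepsilon)$-coreset of $P$ for the $k$-median cost. -/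
open scoped BigOperators Classical

noncomputable def minDist {d : ℕ} (x : EuclideanSpace ℝ (Fin d))
    (C : Finset (EuclideanSpace ℝ (Fin d))) : ℝ :=
  sInf ((fun c => dist x c) '' (C : Set (EuclideanSpace ℝ (Fin d))))

/-- The `k`-median cost `Φ_M(P, C) = ∑_{p ∈ P} min_{c ∈ C} dist p c`. -/
noncomputable def PhiM {d : ℕ} (P C : Finset (EuclideanSpace ℝ (Fin d))) : ℝ :=
  ∑ p ∈ P, minDist p C

/-- The optimal `k`-median cost of `P`. -/
noncomputable def OptM {d : ℕ} (k : ℕ) (P : Finset (EuclideanSpace ℝ (Fin d))) : ℝ :=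
  sInf {x : ℝ | ∃ C : Finset (EuclideanSpace ℝ (Fin d)),
    C.Nonempty ∧ C.card ≤ k ∧ x = PhiM P C}

/-! The distance to a fixed set is 1-Lipschitz, so moving every `p ∈ P` to `f p` changes the cost
of any `C` by at most `∑ p ∈ P, dist p (f p)`. This is at most `ε` times the optimal cost, hence at
most `ε` times the cost of `C`. -/

section PseudoMetricSpace

open Metric

variable {α : Type*} [PseudoMetricSpace α]

/-- The `k`-median cost of a finite set `P` for the centres `C`, in any pseudometric space. It is
defined through `Metric.infDist`, so it is `0` when `C` is empty. -/
noncomputable def kMedianCost (P C : Finset α) : ℝ :=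
  ∑ p ∈ P, infDist p C

/-- The optimal `k`-median cost of `P`, the centres ranging over the whole space. It is `0` when
there is no admissible set of centres, in particular when `k = 0`. -/
noncomputable def optKMedianCost (k : ℕ) (P : Finset α) : ℝ :=
  sInf {x : ℝ | ∃ C : Finset α, C.Nonempty ∧ C.card ≤ k ∧ x = kMedianCost P C}

/-- `S` with weights `w` is a `(k, ε)`-coreset of `P` for the `k`-median cost: up to a factor
`1 ± ε`, the weighted cost of `S` agrees with the cost of `P` for every choice of at most `k`
centres. The set `S` need not lie in `P`, and `w` may take negative values. -/
def IsKMedianCoreset (k : ℕ) (ε : ℝ) (P S : Finset α) (w : α → ℝ) : Prop :=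
  ∀ C : Finset α, C.Nonempty → C.card ≤ k →
    (1 - ε) * kMedianCost P C ≤ ∑ s ∈ S, w s * infDist s C ∧
      ∑ s ∈ S, w s * infDist s C ≤ (1 + ε) * kMedianCost P C

theorem kMedianCost_nonneg (P C : Finset α) : 0 ≤ kMedianCost P C :=
  Finset.sum_nonneg fun _ _ => infDist_nonneg

theorem optKMedianCost_le_kMedianCost {k : ℕ} {C : Finset α} (hC : C.Nonempty) (hCk : C.card ≤ k)
    (P : Finset α) : optKMedianCost k P ≤ kMedianCost P C :=
  csInf_le ⟨0, by rintro _ ⟨D, -, -, rfl⟩; exact kMedianCost_nonneg P D⟩ ⟨C, hC, hCk, rfl⟩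

theorem abs_sum_infDist_comp_sub_kMedianCost_le (P C : Finset α) (f : α → α) :
    |∑ p ∈ P, infDist (f p) C - kMedianCost P C| ≤ ∑ p ∈ P, dist p (f p) := by
  rw [← Real.dist_eq, kMedianCost]
  refine dist_sum_sum_le_of_le P fun p _ => ?_
  simpa only [NNReal.coe_one, one_mul, dist_comm (f p) p] using
    (lipschitz_infDist_pt (C : Set α)).dist_le_mul (f p) p

theorem sum_image_card_fiber_mul {ι β : Type*} [DecidableEq β] (P : Finset ι) (f : ι → β)
    (g : β → ℝ) :
    ∑ s ∈ P.image f, ((P.filter fun p => f p = s).card : ℝ) * g s = ∑ p ∈ P, g (f p) := by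
  simp only [Finset.sum_comp g f, nsmul_eq_mul]

theorem stmt4_general [DecidableEq α] {k : ℕ} {ε : ℝ} (hε : 0 ≤ ε) {P : Finset α} {f : α → α}
    (hsum : ∑ p ∈ P, dist p (f p) ≤ ε * optKMedianCost k P) :
    IsKMedianCoreset k ε P (P.image f) fun s => ((P.filter fun p => f p = s).card : ℝ) := by
  intro C hC hCk
  have hmove : |∑ p ∈ P, infDist (f p) C - kMedianCost P C| ≤ ε * kMedianCost P C :=
    calc |∑ p ∈ P, infDist (f p) C - kMedianCost P C|
        ≤ ∑ p ∈ P, dist p (f p) := abs_sum_infDist_comp_sub_kMedianCost_le P C f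
      _ ≤ ε * optKMedianCost k P := hsum
      _ ≤ ε * kMedianCost P C := by gcongr; exact optKMedianCost_le_kMedianCost hC hCk P
  rw [sum_image_card_fiber_mul P f fun s => infDist s C]
  obtain ⟨hlower, hupper⟩ := abs_le.mp hmove
  constructor <;> linarith

end PseudoMetricSpace

section EuclideanSpace

variable {d : ℕ}

theorem minDist_eq_infDist (x : EuclideanSpace ℝ (Fin d)) (C : Finset (EuclideanSpace ℝ (Fin d))) :
    minDist x C = Metric.infDist x C := by
  rw [minDist, sInf_image', Metric.infDist_eq_iInf]

theorem PhiM_eq_kMedianCost (P C : Finset (EuclideanSpace ℝ (Fin d))) :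
    PhiM P C = kMedianCost P C :=
  Finset.sum_congr rfl fun p _ => minDist_eq_infDist p C

theorem OptM_eq_optKMedianCost (k : ℕ) (P : Finset (EuclideanSpace ℝ (Fin d))) :
    OptM k P = optKMedianCost k P := by
  simp only [OptM, optKMedianCost, PhiM_eq_kMedianCost]

end EuclideanSpace

theorem stmt4 (d k : ℕ) (hd : 1 ≤ d) (hk : 1 ≤ k) (ε : ℝ) (hε : 0 < ε)
    (P : Finset (EuclideanSpace ℝ (Fin d))) (hP : P.Nonempty)
    (f : EuclideanSpace ℝ (Fin d) → EuclideanSpace ℝ (Fin d))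
    (hf : ∀ p ∈ P, f p ∈ P)
    (hsum : ∑ p ∈ P, dist p (f p) ≤ ε * OptM k P) :
    ∀ C : Finset (EuclideanSpace ℝ (Fin d)), C.Nonempty → C.card ≤ k →
      (1 - ε) * PhiM P C ≤
          ∑ s ∈ P.image f, ((P.filter fun p => f p = s).card : ℝ) * minDist s C ∧
        ∑ s ∈ P.image f, ((P.filter fun p => f p = s).card : ℝ) * minDist s C ≤
          (1 + ε) * PhiM P C := by
  simp only [PhiM_eq_kMedianCost, OptM_eq_optKMedianCost, minDist_eq_infDist] at hsum ⊢
  exact stmt4_general hε.le hsum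
end

section
/- Let $P$ be a finite nonempty subset of $\mathbb{R}^d$, let $k \ge 1$ be an integer, let $\varepsilon > 0$, and let $f : P \to P$ be a map satisfying $\operatorname{dist}(p, f(p)) \le \varepsilon \cdot \mathrm{Opt}^c_k(P)$ for every $p \in P$, where $\mathrm{Opt}^c_k(P)$ is the optimal $k$-center cost of $P$. Then $S = f(P)$ is a $(k,\varepsilon)$-coreset of $P$ for the $k$-center cost: for every finite nonempty set $C \subseteq \mathbb{R}^d$ with $|C| \le k$, $(1-\varepsilon)\Phi_c(P,C) \le \Phi_c(S,C) \le (1+\varepsilon)\Phi_c(P,C)$. -/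
open scoped BigOperators Classical

/-- The `k`-center cost `Φ_c(P, C) = max_{p ∈ P} min_{c ∈ C} dist p c`. -/
noncomputable def PhiC {d : ℕ} (P C : Finset (EuclideanSpace ℝ (Fin d))) : ℝ :=
  sSup ((fun p => minDist p C) '' (P : Set (EuclideanSpace ℝ (Fin d))))

/-- The optimal `k`-center cost of `P`. -/
noncomputable def OptC {d : ℕ} (k : ℕ) (P : Finset (EuclideanSpace ℝ (Fin d))) : ℝ :=
  sInf {x : ℝ | ∃ C : Finset (EuclideanSpace ℝ (Fin d)),
    C.Nonempty ∧ C.card ≤ k ∧ x = PhiC P C}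

/-!
Moving a point by at most `r` changes its distance to `C` by at most `r`, so replacing `P` by `f(P)`
changes the `k`-center cost by at most `r = ε * Opt_k(P)`, for every `C` at once. Since `C` itself
competes in the infimum defining `Opt_k(P)`, this error is at most `ε * Φ(P, C)`.
-/

section PseudoMetric

open Metric Bornology

variable {X : Type*} [PseudoMetricSpace X] {P Q : Set X} {r : ℝ}

/-- The `k`-center cost `Φ(P, C)` of a center set `C` in a pseudometric space. Being a real
supremum, it takes the junk value `0` when the distances from `P` to `C` are unbounded. -/
noncomputable def kCenterCost (P C : Set X) : ℝ :=
  sSup ((infDist · C) '' P)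

/-- The optimal `k`-center cost `Opt_k(P)` in a pseudometric space. The centers range over the whole
space, not only over `P`. -/
noncomputable def optKCenterCost (k : ℕ) (P : Set X) : ℝ :=
  sInf {x | ∃ C : Finset X, C.Nonempty ∧ C.card ≤ k ∧ x = kCenterCost P C}

theorem kCenterCost_nonneg (P C : Set X) : 0 ≤ kCenterCost P C :=
  Real.sSup_nonneg (Set.forall_mem_image.2 fun _ _ => infDist_nonneg)

theorem kCenterCost_le (hP : P.Nonempty) {C : Set X} (h : ∀ p ∈ P, infDist p C ≤ r) :
    kCenterCost P C ≤ r :=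
  csSup_le (hP.image _) (Set.forall_mem_image.2 h)

theorem infDist_le_kCenterCost (hP : IsBounded P) (C : Set X) {p : X} (hp : p ∈ P) :
    infDist p C ≤ kCenterCost P C :=
  le_csSup ((lipschitz_infDist_pt C).isBounded_image hP).bddAbove (Set.mem_image_of_mem _ hp)

theorem kCenterCost_le_add (hP : P.Nonempty) (hQ : IsBounded Q)
    (h : ∀ p ∈ P, ∃ q ∈ Q, dist p q ≤ r) (C : Set X) :
    kCenterCost P C ≤ kCenterCost Q C + r := by
  refine kCenterCost_le hP fun p hp => ?_
  obtain ⟨q, hq, hpq⟩ := h p hp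
  calc infDist p C
      ≤ infDist q C + dist p q := infDist_le_infDist_add_dist
    _ ≤ kCenterCost Q C + r := add_le_add (infDist_le_kCenterCost hQ C hq) hpq

theorem optKCenterCost_le {k : ℕ} (P : Set X) {C : Finset X} (hC : C.Nonempty) (hCk : C.card ≤ k) :
    optKCenterCost k P ≤ kCenterCost P C := by
  refine csInf_le ⟨0, ?_⟩ ⟨C, hC, hCk, rfl⟩
  rintro _ ⟨D, -, -, rfl⟩
  exact kCenterCost_nonneg P D

theorem isBounded_image_of_dist_le (hP : IsBounded P) {f : X → X}
    (hf : ∀ p ∈ P, dist p (f p) ≤ r) : IsBounded (f '' P) :=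
  hP.cthickening.subset <| Set.image_subset_iff.2 fun p hp =>
    mem_cthickening_of_dist_le (f p) p r P hp (dist_comm p (f p) ▸ hf p hp)

theorem stmt5_general {k : ℕ} {ε : ℝ} (hε : 0 ≤ ε) (hP : P.Nonempty) (hPb : IsBounded P)
    {f : X → X} (hf : ∀ p ∈ P, dist p (f p) ≤ ε * optKCenterCost k P)
    {C : Finset X} (hC : C.Nonempty) (hCk : C.card ≤ k) :
    (1 - ε) * kCenterCost P C ≤ kCenterCost (f '' P) C ∧
      kCenterCost (f '' P) C ≤ (1 + ε) * kCenterCost P C := by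
  have herr : ε * optKCenterCost k P ≤ ε * kCenterCost P C :=
    mul_le_mul_of_nonneg_left (optKCenterCost_le P hC hCk) hε
  have hlower : kCenterCost P C ≤ kCenterCost (f '' P) C + ε * optKCenterCost k P :=
    kCenterCost_le_add hP (isBounded_image_of_dist_le hPb hf)
      (fun p hp => ⟨f p, Set.mem_image_of_mem f hp, hf p hp⟩) C
  have hupper : kCenterCost (f '' P) C ≤ kCenterCost P C + ε * optKCenterCost k P :=
    kCenterCost_le_add (hP.image f) hPb
      (Set.forall_mem_image.2 fun p hp => ⟨p, hp, dist_comm p (f p) ▸ hf p hp⟩) C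
  constructor <;> linarith

end PseudoMetric

section Euclidean

variable {d : ℕ}

theorem PhiC_eq_kCenterCost (P C : Finset (EuclideanSpace ℝ (Fin d))) :
    PhiC P C = kCenterCost (P : Set (EuclideanSpace ℝ (Fin d))) C := by
  simp only [PhiC, kCenterCost, minDist_eq_infDist]

theorem OptC_eq_optKCenterCost (k : ℕ) (P : Finset (EuclideanSpace ℝ (Fin d))) :
    OptC k P = optKCenterCost k (P : Set (EuclideanSpace ℝ (Fin d))) := by
  simp only [OptC, optKCenterCost, PhiC_eq_kCenterCost]

end Euclidean

theorem stmt5 (d k : ℕ) (hd : 1 ≤ d) (hk : 1 ≤ k) (ε : ℝ) (hε : 0 < ε)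
    (P : Finset (EuclideanSpace ℝ (Fin d))) (hP : P.Nonempty)
    (f : EuclideanSpace ℝ (Fin d) → EuclideanSpace ℝ (Fin d))
    (hf : ∀ p ∈ P, f p ∈ P)
    (hdist : ∀ p ∈ P, dist p (f p) ≤ ε * OptC k P) :
    ∀ C : Finset (EuclideanSpace ℝ (Fin d)), C.Nonempty → C.card ≤ k →
      (1 - ε) * PhiC P C ≤ PhiC (P.image f) C ∧
        PhiC (P.image f) C ≤ (1 + ε) * PhiC P C := by
  intro C hC hCk
  simp only [OptC_eq_optKCenterCost, PhiC_eq_kCenterCost, Finset.coe_image] at hdist ⊢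
  exact stmt5_general hε.le hP P.finite_toSet.isBounded hdist hC hCk
end

section
/- Let $d \ge 1$ and let $B = \prod_{i=1}^d [a_i,b_i]$ and $Q = \prod_{i=1}^d [c_i,d_i]$ be axis-parallel boxes in $\mathbb{R}^d$ with $a_i \le b_i$ and $c_i < d_i$ for all $i$. Fix an integer $t$ with $1 \le t \le d$. If every face of $Q$ of dimension strictly less than $t$ is disjoint from $B$, then there exists a set $I \subseteq \{1,\ldots,d\}$ with $|I| = t$ such that for every $i \in I$, both facets of $Q$ orthogonal to the $i$-th axis are disjoint from $B$. -/
/-- The axis-parallel box `∏ i, [lo i, hi i]` in `ℝ^d`. -/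
def box {d : ℕ} (lo hi : Fin d → ℝ) : Set (Fin d → ℝ) :=
  Set.univ.pi fun i => Set.Icc (lo i) (hi i)

/-- A face of the box `∏ i, [lo i, hi i]`, encoded by `σ : Fin d → Option Bool`:
`σ i = none` means the full interval `[lo i, hi i]`, `σ i = some false` means `{lo i}`,
and `σ i = some true` means `{hi i}`. -/
def face {d : ℕ} (lo hi : Fin d → ℝ) (σ : Fin d → Option Bool) : Set (Fin d → ℝ) :=
  Set.univ.pi fun i =>
    match σ i with
    | none => Set.Icc (lo i) (hi i)
    | some false => {lo i}
    | some true => {hi i}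

/-- The dimension of the face encoded by `σ`: the number of coordinates carrying the
full interval. -/
def faceDim {d : ℕ} (σ : Fin d → Option Bool) : ℕ :=
  (Finset.univ.filter fun i => σ i = none).card

/-!
A face of `Q` and a product set meet exactly when they meet in every coordinate, so faces meeting
`B` can be glued coordinate by coordinate. Let `S` be the set of axes both of whose facets avoid
`B`. For each `i ∉ S` some facet orthogonal to `i` meets `B`; as long as such an `i` exists, gluing
these facets gives a face that meets `B` and is free precisely in the coordinates of `S`. Its
dimension is `#S`, so `t ≤ #S`. If no such `i` exists, then `#S = d ≥ t`.
-/

section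

variable {d t : ℕ} {lo hi : Fin d → ℝ}

/-- The code of a facet orthogonal to the `i`-th axis: the lower one for `bit = false`, the upper
one for `bit = true`. -/
def facetCode (i : Fin d) (bit : Bool) : Fin d → Option Bool :=
  fun j => if j = i then some bit else none

theorem facetCode_self (i : Fin d) (bit : Bool) : facetCode i bit i = some bit :=
  if_pos rfl

theorem facetCode_of_ne {i j : Fin d} (h : j ≠ i) (bit : Bool) : facetCode i bit j = none :=
  if_neg h

open Classical in
/-- The axes for which both orthogonal facets of the box `∏ i, [lo i, hi i]` are disjoint
from `B`. -/
noncomputable def avoidedAxes (lo hi : Fin d → ℝ) (B : Set (Fin d → ℝ)) : Finset (Fin d) :=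
  {i | ∀ bit, Disjoint (face lo hi (facetCode i bit)) B}

theorem mem_avoidedAxes {B : Set (Fin d → ℝ)} {i : Fin d} :
    i ∈ avoidedAxes lo hi B ↔ ∀ bit, Disjoint (face lo hi (facetCode i bit)) B := by
  simp [avoidedAxes]

theorem exists_facet_not_disjoint {B : Set (Fin d → ℝ)} {i : Fin d}
    (h : i ∉ avoidedAxes lo hi B) :
    ∃ bit, ¬Disjoint (face lo hi (facetCode i bit)) B := by
  simpa only [mem_avoidedAxes, not_forall] using h

theorem exists_coord_forall_disjoint_face {s : Fin d → Set ℝ} {σ : Fin d → Option Bool}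
    (h : Disjoint (face lo hi σ) (Set.univ.pi s)) :
    ∃ i, ∀ τ : Fin d → Option Bool, τ i = σ i → Disjoint (face lo hi τ) (Set.univ.pi s) := by
  obtain ⟨i, hdisj⟩ := Set.disjoint_univ_pi.1 h
  exact ⟨i, fun τ hτ => Set.disjoint_univ_pi.2 ⟨i, by rwa [hτ]⟩⟩

theorem exists_face_not_disjoint_of_avoidedAxes_ne_univ {s : Fin d → Set ℝ}
    (h : avoidedAxes lo hi (Set.univ.pi s) ≠ Finset.univ) :
    ∃ σ, faceDim σ = (avoidedAxes lo hi (Set.univ.pi s)).card ∧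
      ¬Disjoint (face lo hi σ) (Set.univ.pi s) := by
  set S := avoidedAxes lo hi (Set.univ.pi s)
  obtain ⟨k, hk⟩ : ∃ k, k ∉ S := by
    simpa only [ne_eq, Finset.eq_univ_iff_forall, not_forall] using h
  choose! bit hbit using fun i (hiS : i ∉ S) => exists_facet_not_disjoint hiS
  let σ : Fin d → Option Bool := fun i => if i ∈ S then none else some (bit i)
  have hfree : ∀ i, σ i = none ↔ i ∈ S := by simp [σ]
  refine ⟨σ, by simp [faceDim, hfree], fun hσ => ?_⟩
  obtain ⟨i, hdisj⟩ := exists_coord_forall_disjoint_face hσ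
  by_cases hiS : i ∈ S
  · have hik : i ≠ k := ne_of_mem_of_not_mem hiS hk
    refine hbit k hk (hdisj _ ?_)
    rw [facetCode_of_ne hik, (hfree i).2 hiS]
  · refine hbit i hiS (hdisj _ ?_)
    rw [facetCode_self]
    exact (if_neg hiS).symm

theorem le_card_avoidedAxes {s : Fin d → Set ℝ} (htd : t ≤ d)
    (hface : ∀ σ, faceDim σ < t → Disjoint (face lo hi σ) (Set.univ.pi s)) :
    t ≤ (avoidedAxes lo hi (Set.univ.pi s)).card := by
  by_cases huniv : avoidedAxes lo hi (Set.univ.pi s) = Finset.univ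
  · rwa [huniv, Finset.card_fin]
  · obtain ⟨σ, hdim, hmeet⟩ := exists_face_not_disjoint_of_avoidedAxes_ne_univ huniv
    exact hdim ▸ not_lt.1 (mt (hface σ) hmeet)

theorem stmt10_general {s : Fin d → Set ℝ} (htd : t ≤ d)
    (hface : ∀ σ, faceDim σ < t → Disjoint (face lo hi σ) (Set.univ.pi s)) :
    ∃ I : Finset (Fin d), I.card = t ∧ ∀ i ∈ I, ∀ bit,
      Disjoint (face lo hi (facetCode i bit)) (Set.univ.pi s) := by
  obtain ⟨I, hI, hcard⟩ := Finset.exists_subset_card_eq (le_card_avoidedAxes htd hface)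
  exact ⟨I, hcard, fun i hiI => mem_avoidedAxes.1 (hI hiI)⟩

end

theorem stmt10 (d t : ℕ) (hd : 1 ≤ d) (ht1 : 1 ≤ t) (htd : t ≤ d)
    (a b c e : Fin d → ℝ) (hab : ∀ i, a i ≤ b i) (hce : ∀ i, c i < e i)
    (hface : ∀ σ : Fin d → Option Bool, faceDim σ < t →
      Disjoint (face c e σ) (box a b)) :
    ∃ I : Finset (Fin d), I.card = t ∧ ∀ i ∈ I, ∀ bit : Bool,
      Disjoint (face c e fun j => if j = i then some bit else none) (box a b) :=
  stmt10_general htd hface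
end
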